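/- arXiv:1306.0251 — 4 statements merged into one kernel-verified Lean document; each statement's English description precedes it below -/
import Mathlib

section
/- Let A be a *-ring and let D : A → A be a skew-hermitian derivation. Then for every partial isometry v ∈ A (i.e. v·v*·v = v), the element v v* D(v) v* is hermitian: (v v* D(v) v*)* = v v* D(v) v*. -/
/-- If `D` is a skew-hermitian derivation on a *-ring `A`, then for every partial
isometry `v` (`v v* v = v`), the element `v v* D(v) v*` is hermitian. -/
theorem skew_deriv_partialIsometry_hermitian {A : Type*} [Ring A] [StarRing A]
    (D : A → A)
    (hadd : ∀ x y, D (x + y) = D x + D y)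
    (hleib : ∀ x y, D (x * y) = D x * y + x * D y)
    (hskew : ∀ x, D (star x) = - star (D x))
    (v : A) (hv : v * star v * v = v) :
    star (v * star v * D v * star v) = v * star v * D v * star v := by
  -- With `p = v v*`, a projection, the corner `p D(p) p` vanishes; expanding
  -- `D(p) = D(v) v* - v D(v)*` in it gives `p D(v) v* = v D(v)* p`, which is the claim.
  have hv' : star v * (v * star v) = star v := by
    have h := congrArg star hv
    simpa [mul_assoc] using h
  have hp : v * star v * (v * star v) = v * star v := by
    rw [← mul_assoc, hv]
  have hcorner : v * star v * D (v * star v) * (v * star v) = 0 := by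
    generalize v * star v = p at hp
    have h : p * D p * p = p * D p * p + p * D p * p := by
      calc p * D p * p = p * D (p * p) * p := by rw [hp]
        _ = p * D p * (p * p) + (p * p) * D p * p := by rw [hleib]; noncomm_ring
        _ = _ := by rw [hp]
    exact left_eq_add.mp h
  have hsub : v * star v * D v * star v - v * star (D v) * (v * star v) = 0 := by
    calc _ = v * star v * D v * (star v * (v * star v))
          - (v * star v * v) * star (D v) * (v * star v) := by rw [hv', hv]
      _ = v * star v * D (v * star v) * (v * star v) := by
        rw [hleib, hskew]; noncomm_ring
      _ = 0 := hcorner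
  simpa [mul_assoc] using (sub_eq_zero.mp hsub).symm
end

section
/- Let A be a *-ring and let D : A → A be a derivation. Let v₁, v₂ ∈ A be partial isometries (vᵢ vᵢ* vᵢ = vᵢ) and let p ∈ A be a projection such that p v₁ = v₁ p = 0, p v₁* = v₁* p = 0, p D(v₁ v₁*) = D(v₁ v₁*) p = 0, p D(v₁* v₁) = D(v₁* v₁) p = 0, and v₂ = p v₂ p. Then (v₁ + v₂)(v₁ + v₂)* D(v₁ + v₂) (v₁ + v₂)* = v₁ v₁* D(v₁) v₁* + v₂ v₂* D(v₂) v₂*. -/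
/-!
Since `v₁ = (v₁ v₁*) v₁ = v₁ (v₁* v₁)`, the Leibniz rule and the hypotheses on `p` give
`p D(v₁) = D(v₁) p = 0`. Differentiating `(v₁ v₁*) v₂ = 0` and `v₂ (v₁* v₁) = 0` gives
`v₁ v₁* D(v₂) = 0` and `D(v₂) v₁* = 0`. These four identities kill every mixed term in the
expansion of the left-hand side, because `v₂` and `v₂*` lie in the corner `p A p`.
-/

/-- Orthogonality lemma: if `v₁` is a partial isometry, `p` is a projection
orthogonal to the supports of `v₁` and of `D(v₁ v₁*)`, `D(v₁* v₁)`, and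
`v₂ = p v₂ p` is a partial isometry, then
`(v₁+v₂)(v₁+v₂)* D(v₁+v₂)(v₁+v₂)* = v₁ v₁* D(v₁) v₁* + v₂ v₂* D(v₂) v₂*`. -/
theorem deriv_orthogonal_partialIsometries {A : Type*} [Ring A] [StarRing A]
    (D : A → A)
    (hadd : ∀ x y, D (x + y) = D x + D y)
    (hleib : ∀ x y, D (x * y) = D x * y + x * D y)
    (v₁ v₂ p : A)
    (hv₁ : v₁ * star v₁ * v₁ = v₁)
    (hv₂ : v₂ * star v₂ * v₂ = v₂)
    (hp_idem : p * p = p) (hp_sa : star p = p)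
    (h₁ : p * v₁ = 0) (h₂ : v₁ * p = 0)
    (h₃ : p * star v₁ = 0) (h₄ : star v₁ * p = 0)
    (h₅ : p * D (v₁ * star v₁) = 0) (h₆ : D (v₁ * star v₁) * p = 0)
    (h₇ : p * D (star v₁ * v₁) = 0) (h₈ : D (star v₁ * v₁) * p = 0)
    (hv₂p : v₂ = p * v₂ * p) :
    (v₁ + v₂) * star (v₁ + v₂) * D (v₁ + v₂) * star (v₁ + v₂) =
      v₁ * star v₁ * D v₁ * star v₁ + v₂ * star v₂ * D v₂ * star v₂ := by
  have hD0 : D 0 = 0 := by simpa using hadd 0 0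
  have pv : p * v₂ = v₂ := by
    rw [hv₂p, ← mul_assoc, ← mul_assoc, hp_idem]
  have vp : v₂ * p = v₂ := by
    rw [hv₂p, mul_assoc, hp_idem]
  have psv : p * star v₂ = star v₂ := by
    simpa [hp_sa] using congrArg star vp
  have svp : star v₂ * p = star v₂ := by
    simpa [hp_sa] using congrArg star pv
  have hsv₁ : star v₁ * v₁ * star v₁ = star v₁ := by
    simpa [mul_assoc] using congrArg star hv₁
  have hpD : p * D v₁ = 0 := by
    have h := hleib (v₁ * star v₁) v₁
    rw [hv₁] at h
    rw [h, mul_add, ← mul_assoc, h₅, ← mul_assoc, ← mul_assoc, h₁]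
    simp
  have hDp : D v₁ * p = 0 := by
    have h := hleib v₁ (star v₁ * v₁)
    rw [← mul_assoc v₁, hv₁] at h
    rw [h, add_mul, mul_assoc v₁, h₈, mul_assoc, mul_assoc, h₂]
    simp
  have hsv₁v₂ : star v₁ * v₂ = 0 := by
    rw [← pv, ← mul_assoc, h₄, zero_mul]
  have hv₂sv₁ : v₂ * star v₁ = 0 := by
    rw [← vp, mul_assoc, h₃, mul_zero]
  have hv₁sv₂ : v₁ * star v₂ = 0 := by
    rw [← psv, ← mul_assoc, h₂, zero_mul]
  have heD : v₁ * star v₁ * D v₂ = 0 := by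
    have h := hleib (v₁ * star v₁) v₂
    have h' : D (v₁ * star v₁) * v₂ = 0 := by
      rw [← pv, ← mul_assoc, h₆, zero_mul]
    rw [mul_assoc v₁ (star v₁) v₂, hsv₁v₂, mul_zero, hD0, h', zero_add] at h
    exact h.symm
  have hDs : D v₂ * star v₁ = 0 := by
    have h := hleib v₂ (star v₁ * v₁)
    have h' : v₂ * D (star v₁ * v₁) = 0 := by
      rw [← vp, mul_assoc, h₇, mul_zero]
    rw [← mul_assoc v₂, hv₂sv₁, zero_mul, hD0, h', add_zero] at h
    rw [← hsv₁, ← mul_assoc, ← h, zero_mul]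
  have hsD : star v₂ * D v₁ = 0 := by
    rw [← svp, mul_assoc, hpD, mul_zero]
  have hDsv₂ : D v₁ * star v₂ = 0 := by
    rw [← psv, ← mul_assoc, hDp, zero_mul]
  have hleft : (v₁ + v₂) * star (v₁ + v₂) = v₁ * star v₁ + v₂ * star v₂ := by
    rw [star_add, add_mul, mul_add, mul_add, hv₁sv₂, hv₂sv₁, add_zero, zero_add]
  have hmid : (v₁ * star v₁ + v₂ * star v₂) * (D v₁ + D v₂) =
      v₁ * star v₁ * D v₁ + v₂ * star v₂ * D v₂ := by
    rw [add_mul, mul_add, mul_add, heD, mul_assoc v₂ (star v₂) (D v₁), hsD]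
    simp
  rw [hleft, hadd, hmid, star_add, add_mul, mul_add, mul_add,
    mul_assoc _ (D v₁) (star v₂), hDsv₂, mul_assoc _ (D v₂) (star v₁), hDs]
  simp
end

section
/- Let A be a *-ring, let e and f be projections in A with e f = 0, and let D : A → A be a derivation such that D(f x f) = 0 for all x ∈ A. Set b = D(e)·e − e·D(e). Then D(e) = b e − e b, and b·(f x f) − (f x f)·b = 0 for all x ∈ A (i.e. the inner derivation implemented by b agrees with D at e and vanishes on the corner f A f). -/
/-!
Since `f = f f f` lies in the corner, `D(f) = 0`; differentiating `e f = f e = 0` then gives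
`D(e) f = f D(e) = 0`, so `b` annihilates `f` on both sides. The formula for `D(e)` follows from
`D(e) = D(e) e + e D(e)`, which forces `e D(e) e = 0`.
-/

/-- Let `e`, `f` be projections in a *-ring with `e f = 0`, and `D` a derivation
vanishing on the corner `f A f`. Set `b = D(e) e - e D(e)`. Then
`D(e) = b e - e b` and the inner derivation implemented by `b` vanishes on `f A f`. -/
theorem deriv_corner_commutator {A : Type*} [Ring A] [StarRing A]
    (D : A → A)
    (hadd : ∀ x y, D (x + y) = D x + D y)
    (hleib : ∀ x y, D (x * y) = D x * y + x * D y)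
    (e f : A)
    (he_idem : e * e = e) (he_sa : star e = e)
    (hf_idem : f * f = f) (hf_sa : star f = f)
    (hef : e * f = 0)
    (hcorner : ∀ x : A, D (f * x * f) = 0) :
    D e = (D e * e - e * D e) * e - e * (D e * e - e * D e) ∧
      ∀ x : A, (D e * e - e * D e) * (f * x * f) -
        (f * x * f) * (D e * e - e * D e) = 0 := by
  have hfe : f * e = 0 := by
    simpa [he_sa, hf_sa] using congrArg star hef
  have hD0 : D 0 = 0 := by simpa using hadd 0 0
  have hDf : D f = 0 := by simpa [hf_idem] using hcorner f
  -- Differentiating `e f = 0` and `f e = 0` gives `D(e) f = 0` and `f D(e) = 0`.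
  have hl : D e * f = 0 := by
    have h := hleib e f
    rw [hef, hD0, hDf, mul_zero, add_zero] at h
    exact h.symm
  have hr : f * D e = 0 := by
    have h := hleib f e
    rw [hfe, hD0, hDf, zero_mul, zero_add] at h
    exact h.symm
  have hDe : D e = D e * e + e * D e := by
    simpa [he_idem] using hleib e e
  have hz : e * D e * e = 0 := by
    have h : e * D e * e = e * (D e * e + e * D e) * e := by rw [← hDe]
    have h' : e * (D e * e + e * D e) * e = e * D e * e + e * D e * e := by
      calc e * (D e * e + e * D e) * e
          = e * D e * (e * e) + (e * e) * D e * e := by noncomm_ring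
        _ = _ := by rw [he_idem]
    rw [h'] at h
    exact left_eq_add.mp h
  refine ⟨?_, fun x => ?_⟩
  · calc D e = D e * e + e * D e := hDe
      _ = D e * (e * e) - e * D e * e - (e * D e * e - (e * e) * D e) := by
        rw [hz, he_idem]; noncomm_ring
      _ = _ := by noncomm_ring
  · -- `b` annihilates `f` on both sides, since both `e` and `D(e)` do.
    calc _ = D e * (e * f) * x * f - e * (D e * f) * x * f
          - (f * x * (f * D e) * e - f * x * (f * e) * D e) := by noncomm_ring
      _ = 0 := by rw [hef, hfe, hl, hr]; simp
end

section
/- Let A be a unital *-ring, let e and f be projections in A with e f = 0 and f ≠ 0, let u ∈ A satisfy u* u = e and u u* = f, and let D : A → A be a derivation such that D(f x f) = 0 for all x ∈ A. Then, setting p = e + f, there exists a ∈ A such that D(p x p) = a·(p x p) − (p x p)·a for all x ∈ A (i.e. D agrees with an inner derivation on the corner p A p). -/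
/-!
The element `v = f u` is a partial isometry with `v* v = e`, `v v* = f` and `f v = v = v e`
(`u` itself need not satisfy `f u = u`, since the involution is not assumed proper).
With `w = v*` and `p = e + f = w v + f`, each `y ∈ p A p` expands as
`y = w (v y w) v + w (v y f) + (f y w) v + f y f`, where the four middle factors lie in `f A f`
and are killed by `D`. The Leibniz rule then gives `D y = α y + y β` with `α = D(w) v` and
`β = w D(v)`. Since `α + β = D p` and `p D(p) p = 0`, the element
`a = α - β (1 - p)` satisfies `a y = α y` and `y a = - y β`.
-/

/-- Let `e`, `f` be orthogonal projections in a unital *-ring, equivalent via a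
partial isometry `u` (`u* u = e`, `u u* = f`), with `f ≠ 0`, and let `D` be a
derivation vanishing on the corner `f A f`. Then with `p = e + f` there exists
`a ∈ A` such that `D (p x p) = a (p x p) - (p x p) a` for all `x`. -/
theorem deriv_spatial_on_corner {A : Type*} [Ring A] [StarRing A]
    (D : A → A)
    (hadd : ∀ x y, D (x + y) = D x + D y)
    (hleib : ∀ x y, D (x * y) = D x * y + x * D y)
    (u e f : A)
    (he_idem : e * e = e) (he_sa : star e = e)
    (hf_idem : f * f = f) (hf_sa : star f = f)
    (hef : e * f = 0) (hf_ne : f ≠ 0)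
    (huu : star u * u = e) (huu' : u * star u = f)
    (hcorner : ∀ x : A, D (f * x * f) = 0) :
    ∃ a : A, ∀ x : A,
      D ((e + f) * x * (e + f)) =
        a * ((e + f) * x * (e + f)) - ((e + f) * x * (e + f)) * a := by
  have hfe : f * e = 0 := by
    have h := congrArg star hef
    rwa [star_mul, he_sa, hf_sa, star_zero] at h
  obtain ⟨v, w, hwv, hvw, hfv, hve, hwf, hew⟩ : ∃ v w : A, w * v = e ∧ v * w = f ∧
      f * v = v ∧ v * e = v ∧ w * f = w ∧ e * w = w := by
    have h1 : f * u = u * e := by rw [← huu, ← huu', mul_assoc]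
    have h2 : star u * f = e * star u := by rw [← huu, ← huu', mul_assoc]
    refine ⟨f * u, star u * f, ?_, ?_, ?_, ?_, ?_, ?_⟩
    · calc star u * f * (f * u) = star u * (f * f) * u := by noncomm_ring
        _ = star u * (f * u) := by rw [hf_idem, mul_assoc]
        _ = e := by rw [h1, ← mul_assoc, huu, he_idem]
    · calc f * u * (star u * f) = f * (u * star u) * f := by noncomm_ring
        _ = f := by rw [huu', hf_idem, hf_idem]
    · rw [← mul_assoc, hf_idem]
    · rw [h1, mul_assoc, he_idem]
    · rw [mul_assoc, hf_idem]
    · rw [h2, ← mul_assoc, he_idem]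
  have hDf : D f = 0 := by simpa [hf_idem] using hcorner 1
  obtain ⟨p, hp⟩ : ∃ p, p = e + f := ⟨_, rfl⟩
  have hpp : p * p = p := by
    rw [hp, mul_add, add_mul, add_mul, he_idem, hf_idem, hef, hfe]; abel
  have hpwv : w * v + f = p := by rw [hwv, hp]
  have hvp : v * p = v := by
    rw [hp, mul_add, hve, ← hve, mul_assoc, hef, mul_zero, add_zero]
  have hpw : p * w = w := by
    rw [hp, add_mul, hew, ← hew, ← mul_assoc, hfe, zero_mul, add_zero]
  have hDp : D w * v + w * D v = D p := by
    rw [← hpwv, hadd, hleib, hDf, add_zero]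
  have hpDp : p * D p * p = 0 := by
    have h := hleib p p
    rw [hpp] at h
    have h2 := congrArg (fun z => p * z * p) h
    simp only [mul_add, add_mul] at h2
    have h3 : p * (D p * p) * p = p * D p * p := by
      rw [← mul_assoc, mul_assoc _ p p, hpp]
    have h4 : p * (p * D p) * p = p * D p * p := by
      rw [← mul_assoc p p, hpp]
    rw [h3, h4] at h2
    exact left_eq_add.mp h2
  have hD : ∀ y, p * y = y → y * p = y → D y = D w * v * y + y * (w * D v) := by
    intro y hl hr
    have c1 : D (v * y * w) = 0 := by
      rw [← hcorner (v * y * w)]; congr 1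
      calc v * y * w = (f * v) * y * (w * f) := by rw [hfv, hwf]
        _ = _ := by noncomm_ring
    have c2 : D (v * y * f) = 0 := by
      rw [← hcorner (v * y)]; congr 1
      calc v * y * f = (f * v) * y * f := by rw [hfv]
        _ = _ := by noncomm_ring
    have c3 : D (f * y * w) = 0 := by
      rw [← hcorner (y * w)]; congr 1
      calc f * y * w = f * y * (w * f) := by rw [hwf]
        _ = _ := by noncomm_ring
    have hy : y = w * (v * y * w) * v + w * (v * y * f) + f * y * w * v + f * y * f := by
      calc y = (w * v + f) * y * (w * v + f) := by rw [hpwv, hl, hr]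
        _ = _ := by noncomm_ring
    calc D y = D (w * (v * y * w) * v + w * (v * y * f) + f * y * w * v + f * y * f) :=
          congrArg D hy
      _ = D w * v * (y * (w * v + f)) + ((w * v + f) * y) * (w * D v) := by
          simp only [hadd, hleib _ v, hleib w, c1, c2, c3, hcorner y]
          noncomm_ring
      _ = _ := by rw [hpwv, hl, hr]
  refine ⟨D w * v - w * D v * (1 - p), fun x => ?_⟩
  rw [← hp]
  obtain ⟨y, hy⟩ : ∃ y, y = p * x * p := ⟨_, rfl⟩
  rw [← hy]
  have hl : p * y = y := by rw [hy, ← mul_assoc, ← mul_assoc, hpp]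
  have hr : y * p = y := by rw [hy, mul_assoc, hpp]
  have key : y * (D w * v) + y * (w * D v * p) = 0 := by
    calc y * (D w * v) + y * (w * D v * p)
        = y * p * (D w * (v * p)) + y * p * (w * D v * p) := by rw [hvp, hr]
      _ = y * (p * (D w * v + w * D v) * p) := by noncomm_ring
      _ = 0 := by rw [hDp, hpDp, mul_zero]
  rw [hD y hl hr]
  calc D w * v * y + y * (w * D v)
      = D w * v * y - w * D v * (y - y) + y * (w * D v)
          - (y * (D w * v) + y * (w * D v * p)) := by rw [key]; simp
    _ = D w * v * y - w * D v * (y - p * y) + y * (w * D v)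
          - (y * (D w * v) + y * (w * D v * p)) := by rw [hl]
    _ = _ := by noncomm_ring
end
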